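/- For every p_ℓ ≥ 1 and e_{ℓ−1} ∈ {0,…,32}, the length-1 selfish-endorsing attack under Emmy+ is not profitable: if it is feasible, i.e., 60 + 40·p_ℓ + 8·max(24 − e_{ℓ−1}, 0) < 60 + 8·max(e_{ℓ−1} − 8, 0), then the selfish one-block reward R_b(p_ℓ, e_{ℓ−1}) + e_{ℓ−1}·R_e(p_ℓ) is strictly less than the honest one-block reward 2·e_{ℓ−1}, where R_b(p,e) = (16/(p+1))·(4/5 + (1/5)·(e/32)) and R_e(p) = 2/(p+1). -/

import Mathlib

/-- Emmy+ baking reward for a block of priority `p` including `e` endorsements. -/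
def Rb (p e : ℕ) : ℚ := (16 / ((p : ℚ) + 1)) * (4/5 + (1/5) * ((e : ℚ) / 32))

/-- Emmy+ endorsement reward when included in a block of priority `p`. -/
def Re (p : ℕ) : ℚ := 2 / ((p : ℚ) + 1)

/-!
A block of priority `p` can only overtake a block of priority `0` that lacks more than `5 * p` of
the `24` endorsements needed to avoid a delay, so for `1 ≤ p` a feasible attack withholds at least
`14` endorsements. On the other hand, a block of priority `p ≥ 1` at least halves the `2` XTZ that
each endorsement earns honestly, and its baking reward makes up for this loss only when at most `6`
endorsements are withheld.
-/

/-- The Emmy+ validity time `D(p, e)`, in seconds, of a block of priority `p` including `e`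
endorsements. The arguments are integers so that the `32 - e` endorsements left to the honest block
are not a truncated difference. -/
def validityTime (p e : ℤ) : ℤ := 60 + 40 * p + 8 * max (24 - e) 0

theorem five_mul_sub_add_lt_of_validityTime_lt {p q e e' : ℤ} (hqp : q ≤ p)
    (h : validityTime p e < validityTime q e') : 5 * (p - q) + e' < 24 := by
  unfold validityTime at h
  omega

theorem Rb_add_mul_Re (p e : ℕ) :
    Rb p e + e * Re p = (128 + 21 * e) / (10 * (p + 1)) := by
  unfold Rb Re
  field_simp
  ring

theorem Rb_add_mul_Re_lt_two_mul_iff {p e : ℕ} :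
    Rb p e + e * Re p < 2 * e ↔ 128 + e < 20 * (e * p) := by
  rw [Rb_add_mul_Re, div_lt_iff₀ (by positivity), ← Nat.cast_lt (α := ℚ)]
  push_cast
  constructor <;> intro h <;> linarith

theorem length1_attack_not_profitable_general {p e : ℕ} (hp : 1 ≤ p) (he : 7 ≤ e) :
    Rb p e + e * Re p < 2 * e := by
  have h_le : e ≤ e * p := Nat.le_mul_of_pos_right e hp
  exact Rb_add_mul_Re_lt_two_mul_iff.2 (by omega)

theorem length1_attack_not_profitable (pℓ e1 : ℕ)
    (hp : 1 ≤ pℓ) (he : e1 ≤ 32)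
    (hfeasible : (60 : ℤ) + 40 * (pℓ : ℤ) + 8 * max (24 - (e1 : ℤ)) 0 <
      60 + 8 * max ((e1 : ℤ) - 8) 0) :
    Rb pℓ e1 + (e1 : ℚ) * Re pℓ < 2 * (e1 : ℚ) := by
  have hovertake : validityTime pℓ e1 < validityTime 0 (32 - e1) := by
    unfold validityTime
    omega
  have hwithheld := five_mul_sub_add_lt_of_validityTime_lt (by omega) hovertake
  exact length1_attack_not_profitable_general hp (by omega)
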